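/- There is no quantum cap of size 11 in PG(4,4); that is, there is no cap of n = 11 points in PG(4,4) meeting every hyperplane in a number of points with the same parity as n. -/

import Mathlib

/-!
Over a field with four elements `x ^ 3` is `0` or `1` according to whether `x = 0`, so the parity
condition says that `∑ f(v) ^ 3 = 0` for all linear forms `f`, the sum being over the points `v`.
Polarising, `∑ f(v) g(v) ^ 2 = 0` for all `f` and `g`: the code generated by the points is Hermitian
self-orthogonal, and eleven points span a space of dimension at most five.

For a cap the sums over `f` of the binomial coefficients `z choose r` with `r ≤ 3` are known, where
`z` is the number of points with `f(v) = 0`. So is the sum of `(z - 1) (z - 3) (z - 5)`, which is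
nonnegative for odd `z`. The form `f = 0`, with `z = 11`, alone contributes at least this sum in
dimension at most five. Hence the dimension is five and every hyperplane has `1`, `3` or `5` points.

In a generator matrix `(1 | A)`, the `5 × 6` array `A` thus has one zero in each row, and a row and
a nonzero multiple of another agree in none or two places. The zeros lie in different columns.
Normalise the sixth column to `1` and take logarithms of the nonzero entries: subtracting the first
row leaves in each of the four other rows a mark, which is the column of its second zero. Comparing
these rows restricts the digraph of the marks on four vertices so much that none is left in a group
without elements of order two.
-/

open Finset
open scoped Classical

section Lists

variable {R : Type*}

theorem exists_notMem_of_length_lt_card [Fintype R] {l : List R} (hl : l.length < Fintype.card R) :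
    ∃ a, a ∉ l := by
  obtain ⟨a, -, ha⟩ := exists_mem_notMem_of_card_lt_card
    ((List.toFinset_card_le l).trans_lt (hl.trans_eq card_univ.symm))
  exact ⟨a, fun h => ha (List.mem_toFinset.2 h)⟩

theorem mem_of_nodup_of_length_eq_card [Fintype R] {l : List R} (hl : l.Nodup)
    (hcard : l.length = Fintype.card R) (a : R) : a ∈ l := by
  rw [← List.mem_toFinset, (card_eq_iff_eq_univ _).1
    ((List.toFinset_card_of_nodup hl).trans hcard)]
  exact mem_univ a

theorem card_filter_eq_countP [Fintype R] {l : List R} (hl : l.Nodup)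
    (hcard : l.length = Fintype.card R) (P : R → Prop) : #{a | P a} = l.countP P := by
  have huniv : (univ : Finset R) = l.toFinset :=
    (eq_univ_of_forall fun a =>
      List.mem_toFinset.2 (mem_of_nodup_of_length_eq_card hl hcard a)).symm
  rw [huniv, List.countP_eq_length_filter, ← List.toFinset_card_of_nodup (hl.filter _),
    List.toFinset_filter]
  simp

theorem exists_nodup_four_of_ne [Fintype R] (hR : Fintype.card R = 4) {i j : R} (hij : i ≠ j) :
    ∃ k l, [i, j, k, l].Nodup := by
  obtain ⟨k, hk⟩ := exists_notMem_of_length_lt_card (l := [i, j]) (by simp [hR])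
  obtain ⟨l, hl⟩ := exists_notMem_of_length_lt_card (l := [i, j, k]) (by simp [hR])
  exact ⟨k, l, by grind⟩

theorem exists_nodup_four_of_nodup [Fintype R] (hR : Fintype.card R = 4) {i j k : R}
    (h : [i, j, k].Nodup) : ∃ l, [i, j, k, l].Nodup := by
  obtain ⟨l, hl⟩ := exists_notMem_of_length_lt_card (l := [i, j, k]) (by simp [hR])
  exact ⟨l, by grind⟩

theorem eq_or_eq_or_eq_of_nodup [Fintype R] (hR : Fintype.card R = 4) {i j k l : R}
    (h : [i, j, k, l].Nodup) {m : R} (hm : m ≠ i) : m = j ∨ m = k ∨ m = l := by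
  simpa [hm] using mem_of_nodup_of_length_eq_card h (by simp [hR]) m

end Lists

section PairedArrays

variable {G R : Type*} [AddCommGroup G]

/-- The family `0, a, b, c` takes exactly two values, each of them twice. It expresses that two rows
of an array agree in none or two of four columns, whatever multiple of one row is taken. -/
def IsPaired (a b c : G) : Prop :=
  (a = 0 ∧ b = c ∧ b ≠ 0) ∨ (b = 0 ∧ a = c ∧ a ≠ 0) ∨ (c = 0 ∧ a = b ∧ a ≠ 0)

theorem isPaired_of_count {a b c : G}
    (h : ∀ g, [0, a, b, c].count g = 0 ∨ [0, a, b, c].count g = 2) : IsPaired a b c := by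
  have h0 := h 0
  have ha := h a
  have hb := h b
  have hc := h c
  clear h
  simp only [List.count_cons, List.count_nil, beq_iff_eq] at h0 ha hb hc
  grind [IsPaired]

theorem isPaired_zero_right {a b : G} : IsPaired a b 0 ↔ a = b ∧ a ≠ 0 := by
  grind [IsPaired]

theorem isPaired_self_right {a b : G} : IsPaired a b b ↔ a = 0 ∧ b ≠ 0 := by
  grind [IsPaired]

theorem IsPaired.eq_zero_and_eq {a b c : G} (h : IsPaired a b c) (hb : b ≠ 0) (hc : c ≠ 0) :
    a = 0 ∧ b = c := by
  grind [IsPaired]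

/-- The conditions which `IsPaired` imposes on the pairs of rows of a `4 × 5` array whose row `i`
has the entry `0` in column `p i`, the entry `t i` in the fifth column and a nonzero entry `x i` in
the other columns except column `i`, whose entry is ignored. The array itself is forgotten. -/
structure IsMarking (p : R → R) (x t : R → G) : Prop where
  apply_ne : ∀ i, p i ≠ i
  ne_zero : ∀ i, x i ≠ 0
  of_apply_apply_ne : ∀ i, p (p i) ≠ i → x i = x (p i) ∧ t i = t (p i) + x i
  of_apply_apply_eq : ∀ i, p (p i) = i → x i ≠ x (p i) ∧ t i = t (p i)
  of_apply_eq : ∀ i j, i ≠ j → p i = p j → x i ≠ x j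
  of_nodup : ∀ i j, [i, j, p i, p j].Nodup → x i + x j = 0 ∧ t i = t j

variable {p : R → R} {x t : R → G} {N : R → R → G}

theorem exists_mark [Fintype R] (hR : Fintype.card R = 4)
    (hrow : ∀ i j k l, [i, j, k, l].Nodup → IsPaired (N i j) (N i k) (N i l)) (i : R) :
    ∃ p ≠ i, ∃ x ≠ 0, N i p = 0 ∧ ∀ k, k ≠ i → k ≠ p → N i k = x := by
  have mark {j k l : R} (h : [i, j, k, l].Nodup) (h0 : N i j = 0) (hx : N i k = N i l)
      (hx0 : N i k ≠ 0) : ∃ p ≠ i, ∃ x ≠ 0, N i p = 0 ∧ ∀ k, k ≠ i → k ≠ p → N i k = x := by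
    refine ⟨j, by grind, N i k, hx0, h0, fun m hmi hmj => ?_⟩
    rcases eq_or_eq_or_eq_of_nodup hR h hmi with rfl | rfl | rfl
    exacts [absurd rfl hmj, rfl, hx.symm]
  obtain ⟨j, hj⟩ := exists_notMem_of_length_lt_card (l := [i]) (by simp [hR])
  obtain ⟨k, l, h⟩ := exists_nodup_four_of_ne hR (i := i) (j := j) (by grind)
  have hperm : [i, k, j, l].Nodup ∧ [i, l, j, k].Nodup := by
    clear hrow mark
    grind
  rcases hrow i j k l h with ⟨h0, hx, hx0⟩ | ⟨h0, hx, hx0⟩ | ⟨h0, hx, hx0⟩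
  · exact mark h h0 hx hx0
  · exact mark hperm.1 h0 hx hx0
  · exact mark hperm.2 h0 hx hx0

theorem isMarking_of_isPaired [Fintype R] (hR : Fintype.card R = 4) (hp : ∀ i, p i ≠ i)
    (hx : ∀ i, x i ≠ 0) (h0 : ∀ i, N i (p i) = 0) (hN : ∀ i k, k ≠ i → k ≠ p i → N i k = x i)
    (hpair : ∀ i j k l, [i, j, k, l].Nodup →
      IsPaired (t i - t j) (N i k - N j k) (N i l - N j l)) :
    IsMarking p x t where
  apply_ne := hp
  ne_zero := hx
  of_apply_apply_ne i hi := by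
    obtain ⟨l, h⟩ := exists_nodup_four_of_nodup hR (i := i) (j := p i) (k := p (p i)) (by grind)
    have hl : l ≠ i ∧ l ≠ p i ∧ l ≠ p (p i) := by grind
    have key := hpair _ _ _ _ h
    rw [hN i _ hi (hp _), h0 (p i), hN i l hl.1 hl.2.1, hN (p i) l hl.2.1 hl.2.2, sub_zero] at key
    have hxp : x i - x (p i) = 0 := by
      by_contra hne
      exact hx (p i) (sub_eq_self.1 (key.eq_zero_and_eq (hx i) hne).2.symm)
    rw [hxp, isPaired_zero_right] at key
    exact ⟨sub_eq_zero.1 hxp, sub_eq_iff_eq_add'.1 key.1⟩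
  of_apply_apply_eq i hi := by
    obtain ⟨k, l, h⟩ := exists_nodup_four_of_ne hR (hp i).symm
    have hk : k ≠ i ∧ k ≠ p i := by grind
    have hl : l ≠ i ∧ l ≠ p i := by grind
    have key := hpair _ _ _ _ h
    rw [hN i k hk.1 hk.2, hN i l hl.1 hl.2, hN (p i) k hk.2 (hi.symm ▸ hk.1),
      hN (p i) l hl.2 (hi.symm ▸ hl.1), isPaired_self_right] at key
    exact ⟨sub_ne_zero.1 key.2, sub_eq_zero.1 key.1⟩
  of_apply_eq i j hij hpp := by
    obtain ⟨l, h⟩ := exists_nodup_four_of_nodup hR (i := i) (j := j) (k := p i) (by grind)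
    have hl : l ≠ i ∧ l ≠ j ∧ l ≠ p i := by grind
    have key := hpair i j l (p i) (by grind)
    rw [h0 i, hpp, h0 j, hN i l hl.1 hl.2.2, hN j l hl.2.1 (hpp ▸ hl.2.2), sub_zero,
      isPaired_zero_right] at key
    exact sub_ne_zero.1 (key.1 ▸ key.2)
  of_nodup i j h := by
    have hij : p i ≠ j ∧ p j ≠ i ∧ p i ≠ p j := by grind
    have key := hpair _ _ _ _ h
    rw [h0 i, h0 j, hN i _ hij.2.1 hij.2.2.symm, hN j _ hij.1 hij.2.2, zero_sub, sub_zero] at key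
    obtain ⟨ht, hxij⟩ := key.eq_zero_and_eq (neg_ne_zero.2 (hx j)) (hx i)
    exact ⟨by rw [← hxij, neg_add_cancel], sub_eq_zero.1 ht⟩

namespace IsMarking

theorem apply_apply_eq_of_apply_eq (h : IsMarking p x t) {i j : R} (hij : i ≠ j)
    (hp : p i = p j) (hi : p (p i) ≠ i) : p (p j) = j := by
  by_contra hj
  apply h.of_apply_eq i j hij hp
  rw [(h.of_apply_apply_ne i hi).1, (h.of_apply_apply_ne j hj).1, hp]

theorem add_self_ne_zero (hG : ∀ x : G, x + x = 0 → x = 0) (h : IsMarking p x t) (i : R) :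
    x i + x i ≠ 0 :=
  fun hi => h.ne_zero i (hG _ hi)

theorem apply_apply_apply (hG : ∀ x : G, x + x = 0 → x = 0) (h : IsMarking p x t) {i : R}
    (hi : p (p i) ≠ i) : p (p (p i)) = i ∨ p (p (p i)) = p i := by
  by_contra! hne
  have hx : x i = x (p (p i)) :=
    (h.of_apply_apply_ne i hi).1.trans (h.of_apply_apply_ne (p i) hne.2).1
  have hnodup : [i, p (p i), p i, p (p (p i))].Nodup := by
    have := h.apply_ne
    grind
  have hadd := (h.of_nodup i _ hnodup).1
  rw [← hx] at hadd
  exact h.add_self_ne_zero hG i hadd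

theorem exists_apply_apply_ne [Fintype R] (hR : Fintype.card R = 4) (h : IsMarking p x t) :
    ∃ i, p (p i) ≠ i := by
  by_contra! hinv
  obtain ⟨i₀, -⟩ := exists_notMem_of_length_lt_card (R := R) (l := []) (by simp [hR])
  obtain ⟨c, d, hcd⟩ := exists_nodup_four_of_ne hR (h.apply_ne i₀).symm
  have hc : x i₀ + x c = 0 := (h.of_nodup i₀ c (by have := h.apply_ne; grind)).1
  have hpc : x (p i₀) + x c = 0 := (h.of_nodup (p i₀) c (by have := h.apply_ne; grind)).1
  exact (h.of_apply_apply_eq i₀ (hinv i₀)).1 (add_right_cancel (hc.trans hpc.symm))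

theorem false [Fintype R] (hR : Fintype.card R = 4) (hG : ∀ x : G, x + x = 0 → x = 0)
    (h : IsMarking p x t) : False := by
  obtain ⟨a, ha⟩ := h.exists_apply_apply_ne hR
  have hp := h.apply_ne
  have hA := @h.apply_apply_eq_of_apply_eq
  have hB := fun i => h.apply_apply_apply hG (i := i)
  obtain ⟨b, hb⟩ : ∃ b, p a = b := ⟨_, rfl⟩
  obtain ⟨c, hc⟩ : ∃ c, p b = c := ⟨_, rfl⟩
  obtain ⟨d, habcd⟩ : ∃ d, [a, b, c, d].Nodup := exists_nodup_four_of_nodup hR (by grind)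
  have hdabc : [d, a, b, c].Nodup := by grind
  have hd := eq_or_eq_or_eq_of_nodup hR hdabc (hp d)
  rcases hB a ha with hca | hcb
  · rw [hb, hc] at hca
    rcases hd with hd | hd | hd
    · have := @hA c d
      grind
    · have := @hA a d
      grind
    · have := @hA b d
      grind
  · rw [hb, hc] at hcb
    rcases hd with hd | hd | hd
    · have := hB d
      grind
    · have := @hA a d
      grind
    -- The remaining digraph is `a → b ⇄ c ← d`, where the extra column gives `x a = x d`.
    · have htd : x d = x c ∧ t d = t c + x d := by
        have := h.of_apply_apply_ne d
        grind
      have hta : t a = t b + x a := by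
        have := h.of_apply_apply_ne a
        grind
      have htb : t b = t c := by
        have := h.of_apply_apply_eq b
        grind
      have hadd := h.of_nodup a d (by grind)
      have := h.add_self_ne_zero hG a
      clear hA hB
      grind

end IsMarking

theorem not_forall_isPaired (hG : ∀ x : G, x + x = 0 → x = 0) (L : Fin 5 → Fin 5 → G) :
    ¬ ∀ i j k l m, [i, j, k, l, m].Nodup →
      IsPaired (L i k - L j k) (L i l - L j l) (L i m - L j m) := by
  intro hL
  have hnodup {i j k l : Fin 4} (h : [i, j, k, l].Nodup) :
      [0, i.succ, j.succ, k.succ, l.succ].Nodup := by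
    simpa [Fin.succ_ne_zero, eq_comm] using h
  let N (i k : Fin 4) : G := L i.succ k.succ - L 0 k.succ
  have hrow (i j k l : Fin 4) (h : [i, j, k, l].Nodup) :
      IsPaired (N i j) (N i k) (N i l) :=
    hL _ _ _ _ _ ((List.Perm.swap _ _ _).nodup (hnodup h))
  have hpair (i j k l : Fin 4) (h : [i, j, k, l].Nodup) :
      IsPaired (L i.succ 0 - L j.succ 0) (N i k - N j k) (N i l - N j l) := by
    simp only [N, sub_sub_sub_cancel_right]
    have hperm := (List.perm_append_comm (l₁ := [0]) (l₂ := [i.succ, j.succ])).append_right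
      [k.succ, l.succ]
    exact hL _ _ _ _ _ (hperm.nodup (hnodup h))
  choose p hp x hx h0 hN using exists_mark (Fintype.card_fin 4) hrow
  exact (isMarking_of_isPaired (Fintype.card_fin 4) hp hx h0 hN hpair).false
    (Fintype.card_fin 4) hG

end PairedArrays

section ZeroSets

variable {F V ι : Type*} [Field F] [AddCommGroup V] [Module F V] [Fintype ι]

/-- The intersection of the point set `v` with the hyperplane `f = 0`, encoded as the set of the
indices of its points; for `f = 0` this is the set of all indices. -/
noncomputable def zeroSet (v : ι → V) (f : Module.Dual F V) : Finset ι :=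
  univ.filter fun i => f (v i) = 0

@[simp]
theorem zeroSet_zero (v : ι → V) : zeroSet v (0 : Module.Dual F V) = univ := by
  simp [zeroSet]

theorem card_zeroSet_eq_add {v : ι → V} {κ : Type*} [Fintype κ] {a : κ → ι}
    (ha : Function.Injective a) (f : Module.Dual F V) :
    #(zeroSet v f) = #{k | f (v (a k)) = 0} + #{i : {i // i ∉ Set.range a} | f (v i) = 0} := by
  simp only [zeroSet, card_filter]
  rw [← Fintype.sum_subtype_add_sum_subtype (· ∈ Set.range a)]
  congr 1
  convert (Fintype.sum_equiv (Equiv.ofInjective a ha) (fun k => if f (v (a k)) = 0 then 1 else 0)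
    (fun i => if f (v i) = 0 then 1 else 0) fun _ => rfl).symm

variable [FiniteDimensional F V] [Fintype (Module.Dual F V)] {v : ι → V}

theorem card_filter_subset_zeroSet {s : Finset ι} (hs : LinearIndepOn F v s) :
    #{f : Module.Dual F V | s ⊆ zeroSet v f} * Nat.card F ^ #s
      = Nat.card F ^ Module.finrank F V := by
  have hrank : Module.finrank F (Submodule.span F (v '' s)) = #s := by
    rw [Set.image_eq_range, finrank_span_eq_card hs]
    exact Fintype.card_coe s
  set W := Submodule.span F (v '' s)
  have hmem (f : Module.Dual F V) : f ∈ W.dualAnnihilator ↔ s ⊆ zeroSet v f := by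
    rw [← SetLike.mem_coe, Submodule.coe_dualAnnihilator_span]
    simp [Set.subset_def, subset_iff, zeroSet]
  have hcard : #{f : Module.Dual F V | s ⊆ zeroSet v f} = Nat.card W.dualAnnihilator := by
    rw [Nat.card_congr (Equiv.subtypeEquivRight hmem), Nat.card_eq_fintype_card,
      Fintype.card_subtype]
  rw [hcard, Module.natCard_eq_pow_finrank (K := F), ← pow_add, ← hrank, add_comm,
    Subspace.finrank_add_finrank_dualAnnihilator_eq]

theorem sum_choose_card_zeroSet {r : ℕ}
    (hv : ∀ s : Finset ι, #s = r → LinearIndepOn F v s) :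
    (∑ f : Module.Dual F V, (#(zeroSet v f)).choose r) * Nat.card F ^ r
      = (Fintype.card ι).choose r * Nat.card F ^ Module.finrank F V := by
  have hcount : ∑ f : Module.Dual F V, (#(zeroSet v f)).choose r
      = ∑ s ∈ powersetCard r univ, #{f : Module.Dual F V | s ⊆ zeroSet v f} := by
    refine (sum_congr rfl fun f _ => ?_).trans
      (sum_card_bipartiteAbove_eq_sum_card_bipartiteBelow fun f s => s ⊆ zeroSet v f)
    rw [← card_powersetCard]
    congr 1
    ext s
    simp [mem_bipartiteAbove, mem_powersetCard, and_comm]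
  rw [hcount, sum_mul, sum_congr rfl fun s hs => ?_, sum_const, card_powersetCard, card_univ,
    smul_eq_mul]
  rw [← (mem_powersetCard.1 hs).2, card_filter_subset_zeroSet (hv s (mem_powersetCard.1 hs).2)]

end ZeroSets

theorem mul_eq_ratio_mul_iff {F : Type*} [Field F] {a b : F}
    (ha : a ≠ 0) (hb : b ≠ 0) (x y w : Fˣ) :
    x * a = w * (a / b) * (y * b) ↔
      Additive.ofMul x - Additive.ofMul y = Additive.ofMul w := by
  have hmul : w * (a / b) * (y * b) = ((w * y : Fˣ) : F) * a := by
    rw [Units.val_mul]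
    field_simp
  rw [hmul, mul_left_inj' ha, ← Units.ext_iff, sub_eq_iff_eq_add, ← ofMul_mul,
    Additive.ofMul.injective.eq_iff]

section FieldOfCardFour

variable {F : Type*} [Field F] [Fintype F]

theorem two_eq_zero_of_card_eq_four (hF : Fintype.card F = 4) : (2 : F) = 0 := by
  have h : (2 : F) * 2 = 0 := by
    rw [← FiniteField.cast_card_eq_zero F, hF]
    norm_num
  exact mul_self_eq_zero.1 h

theorem pow_three_eq_ite (hF : Fintype.card F = 4) (x : F) : x ^ 3 = if x = 0 then 0 else 1 := by
  split_ifs with hx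
  · simp [hx]
  · rw [← FiniteField.pow_card_sub_one_eq_one x hx, hF]

theorem pow_two_injective (hF : Fintype.card F = 4) : Function.Injective fun x : F => x ^ 2 := by
  intro x y (hxy : x ^ 2 = y ^ 2)
  rw [← FiniteField.pow_card x, ← FiniteField.pow_card y, hF, pow_mul x 2 2, pow_mul y 2 2, hxy]

theorem exists_ne_zero_ne_one (hF : Fintype.card F = 4) : ∃ x : F, x ≠ 0 ∧ x ≠ 1 := by
  obtain ⟨x, hx⟩ := exists_notMem_of_length_lt_card (l := [(0 : F), 1]) (by simp [hF])
  exact ⟨x, by grind⟩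

end FieldOfCardFour

section Hermitian

variable {F V ι : Type*} [Field F] [Fintype F] [AddCommGroup V] [Module F V] [Fintype ι]
  {v : ι → V}

theorem sum_pow_three_eq_zero (hF : Fintype.card F = 4) {f : Module.Dual F V}
    (hf : #(zeroSet v f) % 2 = Fintype.card ι % 2) : ∑ i, f (v i) ^ 3 = 0 := by
  have hcompl : #(zeroSet v f)ᶜ = 2 * (#(zeroSet v f)ᶜ / 2) := by
    have := card_add_card_compl (zeroSet v f)
    omega
  calc ∑ i, f (v i) ^ 3 = #(zeroSet v f)ᶜ := by
        rw [zeroSet, compl_filter, natCast_card_filter]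
        exact sum_congr rfl fun i _ => by rw [pow_three_eq_ite hF, ite_not]
    _ = 0 := by rw [hcompl, Nat.cast_mul, Nat.cast_two, two_eq_zero_of_card_eq_four hF, zero_mul]

theorem sum_mul_sq_eq_zero (hF : Fintype.card F = 4)
    (hv : ∀ f : Module.Dual F V, ∑ i, f (v i) ^ 3 = 0) (f g : Module.Dual F V) :
    ∑ i, f (v i) * g (v i) ^ 2 = 0 := by
  have h2 := two_eq_zero_of_card_eq_four hF
  have hpol (c : F) : c * ∑ i, g (v i) * f (v i) ^ 2 + c ^ 2 * ∑ i, f (v i) * g (v i) ^ 2 = 0 :=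
    calc c * ∑ i, g (v i) * f (v i) ^ 2 + c ^ 2 * ∑ i, f (v i) * g (v i) ^ 2
      _ = ∑ i, (f + c • g) (v i) ^ 3 - ∑ i, f (v i) ^ 3 - c ^ 3 * ∑ i, g (v i) ^ 3 := by
        simp only [mul_sum, ← sum_add_distrib, ← sum_sub_distrib]
        refine sum_congr rfl fun i _ => ?_
        simp only [LinearMap.add_apply, LinearMap.smul_apply, smul_eq_mul]
        linear_combination
          -(c * g (v i) * f (v i) ^ 2 + c ^ 2 * f (v i) * g (v i) ^ 2) * h2
      _ = 0 := by rw [hv, hv, hv, mul_zero, sub_zero, sub_zero]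
  -- Comparing `c` with `1` eliminates the sum in which the square falls on `f`.
  obtain ⟨c, hc0, hc1⟩ := exists_ne_zero_ne_one hF
  have hc : c * (c - 1) * ∑ i, f (v i) * g (v i) ^ 2 = 0 := by
    linear_combination hpol c - c * hpol 1
  simpa [hc0, sub_eq_zero, hc1] using hc

theorem two_mul_finrank_le_card [FiniteDimensional F V] (hF : Fintype.card F = 4)
    (hspan : Submodule.span F (Set.range v) = ⊤)
    (hv : ∀ f g : Module.Dual F V, ∑ i, f (v i) * g (v i) ^ 2 = 0) :
    2 * Module.finrank F V ≤ Fintype.card ι := by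
  let eval : Module.Dual F V →ₗ[F] ι → F := LinearMap.pi fun i => Module.Dual.eval F V (v i)
  let conj (f : Module.Dual F V) : Module.Dual F (ι → F) := ∑ i, f (v i) ^ 2 • LinearMap.proj i
  have hext {f g : Module.Dual F V} (h : ∀ i, f (v i) = g (v i)) : f = g :=
    LinearMap.ext_on_range hspan h
  have heval : Function.Injective eval := fun f g h => hext (congrFun h)
  have hconj_apply (f : Module.Dual F V) (u : ι → F) : conj f u = ∑ i, f (v i) ^ 2 * u i := by
    simp [conj]
  have hconj : Function.Injective conj := fun f g h => hext fun i => pow_two_injective hF <| by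
    have := congrArg (· (Pi.single i 1)) h
    simpa [hconj_apply, Pi.single_apply] using this
  have hmem (f : Module.Dual F V) : conj f ∈ (LinearMap.range eval).dualAnnihilator := by
    rw [Submodule.mem_dualAnnihilator]
    rintro - ⟨g, rfl⟩
    rw [hconj_apply, ← hv g f]
    exact sum_congr rfl fun i _ => mul_comm _ _
  have hle : Module.finrank F V ≤ Module.finrank F (LinearMap.range eval).dualAnnihilator := by
    have := Module.finite_of_finite F (M := (LinearMap.range eval).dualAnnihilator)
    have hcard := Nat.card_le_card_of_injective
      (fun f => (⟨conj f, hmem f⟩ : (LinearMap.range eval).dualAnnihilator))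
      fun f g h => hconj (Subtype.ext_iff.1 h)
    rw [Module.natCard_eq_pow_finrank (K := F) (V := Module.Dual F V),
      Module.natCard_eq_pow_finrank (K := F) (V := (LinearMap.range eval).dualAnnihilator),
      Subspace.dual_finrank_eq] at hcard
    exact (Nat.pow_le_pow_iff_right Finite.one_lt_card).1 hcard
  have hrank := Subspace.finrank_add_finrank_dualAnnihilator_eq (LinearMap.range eval)
  rw [LinearMap.finrank_range_of_inj heval, Subspace.dual_finrank_eq,
    Module.finrank_fintype_fun_eq_card] at hrank
  omega

end Hermitian

theorem cubic_eq_choose (z : ℕ) :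
    ((z : ℤ) - 1) * (z - 3) * (z - 5) = 6 * z.choose 3 - 12 * z.choose 2 + 15 * z - 15 := by
  have h2 (n : ℕ) : (n.choose 2 : ℤ) * 2 = n * (n - 1) := by
    induction n with
    | zero => simp
    | succ n ih =>
      push_cast [Nat.choose_succ_succ' n 1, Nat.choose_one_right]
      linarith
  have h3 : (z.choose 3 : ℤ) * 6 = z * (z - 1) * (z - 2) := by
    induction z with
    | zero => simp
    | succ n ih =>
      push_cast [Nat.choose_succ_succ' n 2]
      linear_combination ih + 3 * h2 n
  linear_combination 6 * h2 z - h3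

theorem cubic_nonneg_of_odd {z : ℕ} (hz : Odd z) : 0 ≤ ((z : ℤ) - 1) * (z - 3) * (z - 5) := by
  obtain ⟨k, rfl⟩ := hz
  match k with
  | 0 | 1 => simp
  | k + 2 =>
    calc (0 : ℤ) ≤ 8 * (k + 2) * (k + 1) * k := by positivity
      _ = _ := by push_cast; ring

theorem finrank_add_one_of_isCoatom {F V : Type*} [Field F] [AddCommGroup V] [Module F V]
    [FiniteDimensional F V] {H : Submodule F V} (hH : IsCoatom H) :
    Module.finrank F H + 1 = Module.finrank F V := by
  rw [← isSimpleModule_iff_isCoatom, isSimpleModule_iff_finrank_eq_one] at hH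
  rw [← H.finrank_quotient_add_finrank, hH, add_comm]

theorem exists_basis_eq_comp {F V ι : Type*} [Field F] [AddCommGroup V] [Module F V] [Finite ι]
    {v : ι → V} (hspan : Submodule.span F (Set.range v) = ⊤) {n : ℕ}
    (hn : Module.finrank F V = n) :
    ∃ a : Fin n → ι, Function.Injective a ∧ ∃ b : Module.Basis (Fin n) F V, ∀ k, b k = v (a k) := by
  obtain ⟨κ, a, ha, hspan', hli⟩ := exists_linearIndependent' F v
  let b : Module.Basis κ F V := Module.Basis.mk hli (hspan'.trans hspan).ge
  have := Finite.of_injective a ha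
  have := Fintype.ofFinite κ
  let e : κ ≃ Fin n :=
    Fintype.equivFinOfCardEq ((Module.finrank_eq_card_basis b).symm.trans hn)
  exact ⟨a ∘ e.symm, ha.comp e.symm.injective, b.reindex e, fun k => by simp [b]⟩

section CoordinateArrays

variable {F J : Type*} [Field F] [Fintype J]

/-- The right-hand part `A` of a generator matrix `(1 | A)` of length `5 + 6` in which every nonzero
combination of rows has `1`, `3` or `5` zeros. Only single rows and differences of two rows enter:
the identity part contributes four, respectively three, of their zeros. -/
structure IsCapArray (A : Fin 5 → J → F) : Prop where
  card_eq_six : Fintype.card J = 6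
  card_eq_zero : ∀ i, #{k | A i k = 0} = 1
  card_eq_mul : ∀ i j, i ≠ j → ∀ c ≠ 0, #{k | A i k = c * A j k} = 0 ∨ #{k | A i k = c * A j k} = 2

namespace IsCapArray

variable {A : Fin 5 → J → F}

theorem exists_zero (hA : IsCapArray A) : ∃ s : Fin 5 → J, ∀ i k, A i k = 0 ↔ k = s i := by
  have h (i : Fin 5) : ∃ s, ∀ k, A i k = 0 ↔ k = s := by
    obtain ⟨s, hs⟩ := card_eq_one.1 (hA.card_eq_zero i)
    exact ⟨s, fun k => by simpa using Finset.ext_iff.1 hs k⟩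
  exact Classical.skolem.1 h

theorem injective_of_zero [Fintype F] (hF : Fintype.card F = 4) (hA : IsCapArray A)
    {s : Fin 5 → J} (hs : ∀ i k, A i k = 0 ↔ k = s i) : Function.Injective s := by
  intro i j hij
  by_contra hne
  have hmaps : Set.MapsTo (fun k => A i k / A j k) (univ.erase (s i)) (univ.erase (0 : F)) := by
    intro k hk
    have hk : k ≠ s i := by simpa using hk
    simp [div_eq_zero_iff, hs, hk, ← hij]
  obtain ⟨k, hk, l, hl, hkl, heq⟩ := exists_ne_map_eq_of_card_lt_of_maps_to
    (by simp [card_erase_of_mem, hF, hA.card_eq_six]) hmaps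
  have hc0 : A i k / A j k ≠ 0 := (mem_erase.1 (hmaps hk)).1
  have hj {m : J} (hm : m ∈ univ.erase (s i)) : A j m ≠ 0 := by
    rw [Ne, hs, ← hij]
    exact ne_of_mem_erase hm
  have hsub : {s i, k, l} ⊆ ({m | A i m = A i k / A j k * A j m} : Finset J) := by
    simp only [insert_subset_iff, singleton_subset_iff, mem_filter_univ]
    refine ⟨?_, (div_mul_cancel₀ _ (hj hk)).symm, ?_⟩
    · rw [(hs i _).2 rfl, (hs j _).2 hij, mul_zero]
    · exact ((div_eq_iff (hj hl)).1 heq.symm)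
  have hcard := card_le_card hsub
  rw [card_eq_three.2 ⟨s i, k, l, (ne_of_mem_erase hk).symm, (ne_of_mem_erase hl).symm, hkl, rfl⟩]
    at hcard
  have := hA.card_eq_mul i j hne _ hc0
  omega

theorem isPaired (hA : IsCapArray A) {s : Fin 5 → J} (hs : ∀ i k, A i k = 0 ↔ k = s i)
    (hinj : Function.Injective s) {r : J} (hr : ∀ i, r ≠ s i) {u : Fin 5 → Fin 5 → Fˣ}
    (hu : ∀ i j, i ≠ j → A i (s j) = u i j * A i r) {i j k l m : Fin 5}
    (h : [i, j, k, l, m].Nodup) :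
    IsPaired (Additive.ofMul (u i k) - Additive.ofMul (u j k))
      (Additive.ofMul (u i l) - Additive.ofMul (u j l))
      (Additive.ofMul (u i m) - Additive.ofMul (u j m)) := by
  have hr0 (i : Fin 5) : A i r ≠ 0 := fun h => hr i ((hs i r).1 h)
  have hzero (i : Fin 5) : A i (s i) = 0 := (hs i _).2 rfl
  have hne {i j : Fin 5} (hij : i ≠ j) : A i (s j) ≠ 0 :=
    fun h => hij (hinj ((hs i _).1 h)).symm
  refine isPaired_of_count fun g => ?_
  obtain ⟨w, rfl⟩ := Additive.ofMul.surjective g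
  let c : F := w * (A i r / A j r)
  have hc : c ≠ 0 := mul_ne_zero w.ne_zero (div_ne_zero (hr0 i) (hr0 j))
  have hat_r : A i r = c * A j r ↔ 0 = Additive.ofMul w := by
    simpa using mul_eq_ratio_mul_iff (hr0 i) (hr0 j) 1 1 w
  have hat (n : Fin 5) (hi : i ≠ n) (hj : j ≠ n) : A i (s n) = c * A j (s n) ↔
      Additive.ofMul (u i n) - Additive.ofMul (u j n) = Additive.ofMul w := by
    rw [hu i n hi, hu j n hj, mul_eq_ratio_mul_iff (hr0 i) (hr0 j)]
  have hcols : [s i, s j, r, s k, s l, s m].Nodup := by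
    have := h.map hinj
    have := hr i
    grind
  have hcard := card_filter_eq_countP hcols (by simp [hA.card_eq_six])
    fun n => A i n = c * A j n
  have hij : i ≠ j := by grind
  simp only [List.countP_cons, List.countP_nil, hzero, hat_r, hat k (by grind) (by grind),
    hat l (by grind) (by grind), hat m (by grind) (by grind)] at hcard
  simp only [decide_eq_true_eq, zero_add, mul_zero, hne hij, hne hij.symm, zero_eq_mul, hc,
    decide_false, Bool.false_eq_true, ↓reduceIte, add_zero, or_self] at hcard
  have := hA.card_eq_mul i j hij c hc
  rw [hcard] at this
  simpa [List.count_cons] using this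

theorem false [Fintype F] (hF : Fintype.card F = 4) (hA : IsCapArray A) : False := by
  obtain ⟨s, hs⟩ := hA.exists_zero
  have hinj := hA.injective_of_zero hF hs
  obtain ⟨r, hr⟩ : ∃ r, ∀ i, r ≠ s i := by
    obtain ⟨r, hr⟩ := exists_notMem_of_length_lt_card (l := List.ofFn s) (by simp [hA.card_eq_six])
    exact ⟨r, fun i h => hr (h ▸ List.mem_ofFn.2 ⟨i, rfl⟩)⟩
  have hunit (i j : Fin 5) : ∃ u : Fˣ, i ≠ j → A i (s j) = u * A i r := by
    by_cases hij : i = j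
    · exact ⟨1, absurd hij⟩
    · have hr0 : A i r ≠ 0 := fun h => hr i ((hs i r).1 h)
      have hj0 : A i (s j) ≠ 0 := fun h => hij (hinj ((hs i _).1 h)).symm
      exact ⟨Units.mk0 _ (div_ne_zero hj0 hr0), fun _ => (div_mul_cancel₀ _ hr0).symm⟩
  choose u hu using hunit
  have hG (x : Additive Fˣ) (hx : x + x = 0) : x = 0 := by
    obtain ⟨w, rfl⟩ := Additive.ofMul.surjective x
    rw [← ofMul_mul, ofMul_eq_zero, ← sq, Units.ext_iff] at hx
    rw [ofMul_eq_zero]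
    exact Units.ext (pow_two_injective hF (by simpa using hx))
  exact not_forall_isPaired hG (fun i j => Additive.ofMul (u i j))
    fun i j k l m h => hA.isPaired hs hinj hr hu h

end IsCapArray

end CoordinateArrays

section QuantumCaps

variable {F V ι : Type*} [Field F] [AddCommGroup V] [Module F V] [Fintype ι] {v : ι → V}

/-- A quantum cap, given by a family `v` of vectors representing its points: no three points are
collinear, and every hyperplane contains as many points as there are in all, modulo two. The
ambient space `V` has arbitrary dimension, so that one can pass to the span of the points. -/
structure IsQuantumCap (F : Type*) {V ι : Type*} [Field F] [AddCommGroup V] [Module F V]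
    [Fintype ι] (v : ι → V) : Prop where
  linearIndepOn : ∀ s : Finset ι, #s = 3 → LinearIndepOn F v s
  card_zeroSet : ∀ f : Module.Dual F V, f ≠ 0 → #(zeroSet v f) % 2 = Fintype.card ι % 2

namespace IsQuantumCap

theorem restrict_span (hv : IsQuantumCap F v) :
    IsQuantumCap F fun i =>
      (⟨v i, Submodule.subset_span ⟨i, rfl⟩⟩ : Submodule.span F (Set.range v)) where
  linearIndepOn s hs :=
    LinearIndepOn.of_comp (Submodule.span F (Set.range v)).subtype (hv.linearIndepOn s hs)
  card_zeroSet f hf := by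
    obtain ⟨g, hg⟩ := f.exists_extend
    have hg0 : g ≠ 0 := by
      rintro rfl
      exact hf (by rw [← hg, LinearMap.zero_comp])
    rw [← hv.card_zeroSet g hg0, ← hg]
    rfl

theorem linearIndepOn_of_card_le (hv : IsQuantumCap F v) (hι : 3 ≤ Fintype.card ι)
    {s : Finset ι} (hs : #s ≤ 3) : LinearIndepOn F v s := by
  obtain ⟨t, hst, ht⟩ := exists_superset_card_eq hs hι
  exact (hv.linearIndepOn t ht).mono (coe_subset.2 hst)

theorem two_mul_finrank_le [Fintype F] [FiniteDimensional F V] (hF : Fintype.card F = 4)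
    (hv : IsQuantumCap F v) (hspan : Submodule.span F (Set.range v) = ⊤) :
    2 * Module.finrank F V ≤ Fintype.card ι := by
  refine two_mul_finrank_le_card hF hspan (sum_mul_sq_eq_zero hF fun f => ?_)
  by_cases hf : f = 0
  · simp [hf]
  · exact sum_pow_three_eq_zero hF (hv.card_zeroSet f hf)

theorem odd_card_zeroSet (hv : IsQuantumCap F v) (hι : Fintype.card ι = 11) {f : Module.Dual F V}
    (hf : f ≠ 0) : Odd #(zeroSet v f) := by
  rw [Nat.odd_iff, hv.card_zeroSet f hf, hι]

theorem sum_cubic [Fintype F] [FiniteDimensional F V] [Fintype (Module.Dual F V)]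
    (hF : Fintype.card F = 4) (hv : IsQuantumCap F v) (hι : Fintype.card ι = 11) :
    64 * ∑ f : Module.Dual F V,
      ((#(zeroSet v f) : ℤ) - 1) * (#(zeroSet v f) - 3) * (#(zeroSet v f) - 5)
      = 30 * 4 ^ Module.finrank F V := by
  have moment (r : ℕ) (hr : r ≤ 3) :
      (∑ f : Module.Dual F V, ((#(zeroSet v f)).choose r : ℤ)) * 4 ^ r
        = Nat.choose 11 r * 4 ^ Module.finrank F V := by
    have := sum_choose_card_zeroSet fun s hs =>
      hv.linearIndepOn_of_card_le (by omega) (s := s) (hs.trans_le hr)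
    rw [Nat.card_eq_fintype_card, hF, hι] at this
    exact_mod_cast this
  have h0 := moment 0 (by norm_num)
  have h1 := moment 1 (by norm_num)
  have h2 := moment 2 (by norm_num)
  have h3 := moment 3 le_rfl
  norm_num [Nat.choose] at h0 h1 h2 h3
  simp only [cubic_eq_choose, sum_add_distrib, sum_sub_distrib, ← mul_sum, sum_const, card_univ,
    nsmul_eq_mul]
  linarith

theorem finrank_eq_five_and_card_zeroSet_le [Fintype F] [FiniteDimensional F V]
    (hF : Fintype.card F = 4) (hv : IsQuantumCap F v) (hι : Fintype.card ι = 11)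
    (hspan : Submodule.span F (Set.range v) = ⊤) :
    Module.finrank F V = 5 ∧ ∀ f : Module.Dual F V, f ≠ 0 → #(zeroSet v f) ≤ 5 := by
  have := Module.finite_of_finite F (M := Module.Dual F V)
  have := Fintype.ofFinite (Module.Dual F V)
  let Q (f : Module.Dual F V) : ℤ :=
    ((#(zeroSet v f) : ℤ) - 1) * (#(zeroSet v f) - 3) * (#(zeroSet v f) - 5)
  have hQ (f : Module.Dual F V) (hf : f ∈ univ.erase 0) : 0 ≤ Q f :=
    cubic_nonneg_of_odd (hv.odd_card_zeroSet hι (ne_of_mem_erase hf))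
  have hsum : 64 * (480 + ∑ f ∈ univ.erase 0, Q f) = 30 * 4 ^ Module.finrank F V := by
    have hQ0 : Q 0 = 480 := by simp [Q, hι]
    rw [← hv.sum_cubic hF hι, ← hQ0,
      add_sum_erase _ _ (mem_univ _)]
  have hle : Module.finrank F V ≤ 5 := by
    have := hv.two_mul_finrank_le hF hspan
    omega
  have hpow : (4 : ℤ) ^ Module.finrank F V ≤ 4 ^ 5 := pow_le_pow_right₀ (by norm_num) hle
  have hnonneg := sum_nonneg hQ
  constructor
  · refine hle.antisymm ((pow_le_pow_iff_right₀ (a := (4 : ℤ)) (by norm_num)).1 ?_)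
    linarith
  · intro f hf
    have hmem : f ∈ univ.erase 0 := mem_erase.2 ⟨hf, mem_univ f⟩
    have hQf : Q f = 0 := (sum_eq_zero_iff_of_nonneg hQ).1 (by linarith) f hmem
    simp only [Q, mul_eq_zero, sub_eq_zero] at hQf
    norm_cast at hQf
    omega

theorem isCapArray (hv : IsQuantumCap F v) (hι : Fintype.card ι = 11) {a : Fin 5 → ι}
    (ha : Function.Injective a) {b : Module.Basis (Fin 5) F V}
    (hb : ∀ k, b k = v (a k)) (hle : ∀ f : Module.Dual F V, f ≠ 0 → #(zeroSet v f) ≤ 5) :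
    IsCapArray fun k (i : {i // i ∉ Set.range a}) => b.coord k (v i) where
  card_eq_six := by
    have := card_zeroSet_eq_add (v := v) ha (0 : Module.Dual F V)
    simp only [zeroSet_zero, LinearMap.zero_apply, filter_true, card_univ, hι,
      Fintype.card_fin] at this
    omega
  card_eq_zero k := by
    have hcoord : b.coord k ≠ 0 := fun h => by simpa using LinearMap.congr_fun h (b k)
    have hbasis : #{l | b.coord k (v (a l)) = 0} = 4 := by
      simp [← hb, Finsupp.single_apply, filter_ne']
    have hodd := hv.odd_card_zeroSet hι hcoord
    have hcard := hle _ hcoord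
    rw [card_zeroSet_eq_add ha, hbasis] at hodd hcard
    rw [Nat.odd_iff] at hodd
    omega
  card_eq_mul k l hkl c hc := by
    have hcoord : b.coord k - c • b.coord l ≠ 0 := fun h => by
      simpa [hkl] using LinearMap.congr_fun h (b k)
    have hvalue (m : Fin 5) : (b.coord k - c • b.coord l) (v (a m))
        = (if m = k then 1 else 0) - if m = l then c else 0 := by
      simp [← hb, Finsupp.single_apply]
    have hbasis : #{m | (b.coord k - c • b.coord l) (v (a m)) = 0} = 3 := by
      have : ({m | (b.coord k - c • b.coord l) (v (a m)) = 0} : Finset (Fin 5)) = {k, l}ᶜ := by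
        ext m
        rw [mem_filter_univ, hvalue, mem_compl, mem_insert, mem_singleton]
        grind
      rw [this, card_compl, card_pair hkl, Fintype.card_fin]
    have hodd := hv.odd_card_zeroSet hι hcoord
    have hcard := hle _ hcoord
    rw [card_zeroSet_eq_add ha, hbasis] at hodd hcard
    rw [Nat.odd_iff] at hodd
    simp only [LinearMap.sub_apply, LinearMap.smul_apply, smul_eq_mul, sub_eq_zero] at hodd hcard
    omega

theorem card_ne_eleven_of_span_eq_top [Fintype F] [FiniteDimensional F V]
    (hF : Fintype.card F = 4) (hv : IsQuantumCap F v)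
    (hspan : Submodule.span F (Set.range v) = ⊤) : Fintype.card ι ≠ 11 := by
  intro hι
  obtain ⟨hrank, hle⟩ := hv.finrank_eq_five_and_card_zeroSet_le hF hι hspan
  obtain ⟨a, ha, b, hb⟩ := exists_basis_eq_comp hspan hrank
  exact (hv.isCapArray hι ha hb hle).false hF

theorem card_ne_eleven [Fintype F] (hF : Fintype.card F = 4) (hv : IsQuantumCap F v) :
    Fintype.card ι ≠ 11 := by
  have := FiniteDimensional.span_of_finite F (Set.finite_range v)
  refine hv.restrict_span.card_ne_eleven_of_span_eq_top hF ?_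
  rw [← Submodule.span_span_coe_preimage]
  congr 1
  ext ⟨x, hx⟩
  simp

end IsQuantumCap

theorem isQuantumCap_rep {K : Finset (Projectivization F V)}
    (hcap : ∀ p ∈ K, ∀ q ∈ K, ∀ r ∈ K, p ≠ q → p ≠ r → q ≠ r →
      LinearIndependent F ![p.rep, q.rep, r.rep])
    (hparity : ∀ H : Submodule F V, IsCoatom H → #{p ∈ K | p.rep ∈ H} % 2 = #K % 2) :
    IsQuantumCap F fun p : K => p.1.rep where
  linearIndepOn s hs := by
    obtain ⟨p, q, r, hpq, hpr, hqr, rfl⟩ := card_eq_three.1 hs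
    have hinj : Function.Injective ![p, q, r] := by
      intro i j
      fin_cases i <;> fin_cases j <;> simp [hpq, hpr, hqr, eq_comm]
    have hrange : (({p, q, r} : Finset K) : Set K) = Set.range ![p, q, r] := by
      ext x
      simp only [Matrix.range_cons, Matrix.range_empty, coe_insert, coe_singleton, Set.union_empty,
        Set.singleton_union]
    rw [hrange, linearIndepOn_range_iff hinj]
    have := hcap p p.2 q q.2 r r.2 (Subtype.coe_ne_coe.2 hpq) (Subtype.coe_ne_coe.2 hpr)
      (Subtype.coe_ne_coe.2 hqr)
    convert this using 1
    ext i
    fin_cases i <;> rfl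
  card_zeroSet f hf := by
    have hH : IsCoatom (LinearMap.ker f) :=
      LinearMap.isCoatom_ker_of_surjective (LinearMap.surjective hf)
    rw [Fintype.card_coe, ← hparity _ hH]
    simp only [zeroSet, LinearMap.mem_ker, card_filter]
    rw [sum_coe_sort K fun p => if f p.rep = 0 then 1 else 0]

end QuantumCaps

theorem stmt19_general {F V : Type*} [Field F] [Fintype F] [AddCommGroup V] [Module F V]
    (hF : Fintype.card F = 4) :
    ¬ ∃ K : Finset (Projectivization F V),
        K.card = 11 ∧
        (∀ p ∈ K, ∀ q ∈ K, ∀ r ∈ K, p ≠ q → p ≠ r → q ≠ r →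
          LinearIndependent F ![p.rep, q.rep, r.rep]) ∧
        (∀ H : Submodule F V, IsCoatom H →
          (K.filter fun p => p.rep ∈ H).card % 2 = 11 % 2) := by
  rintro ⟨K, hK, hcap, hparity⟩
  rw [← hK] at hparity
  exact (isQuantumCap_rep hcap hparity).card_ne_eleven hF ((Fintype.card_coe K).trans hK)

/-- There is no quantum cap of size 11 in `PG(4,4)`: no set of 11 points of the projective
space of `GF(4)^5`, no three of which are collinear, meets every hyperplane in a number of
points congruent to 11 mod 2. -/
theorem stmt19 (F : Type*) [Field F] [Fintype F] (hF : Fintype.card F = 4) :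
    ¬ ∃ K : Finset (Projectivization F (Fin 5 → F)),
        K.card = 11 ∧
        (∀ p ∈ K, ∀ q ∈ K, ∀ r ∈ K, p ≠ q → p ≠ r → q ≠ r →
          LinearIndependent F ![p.rep, q.rep, r.rep]) ∧
        (∀ H : Submodule F (Fin 5 → F), Module.finrank F H = 4 →
          (K.filter fun p => p.rep ∈ H).card % 2 = 11 % 2) := by
  rintro ⟨K, hK, hcap, hparity⟩
  exact stmt19_general hF ⟨K, hK, hcap, fun H hH => hparity H <| by
    simpa using finrank_add_one_of_isCoatom hH⟩
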